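/- For an integer n ≥ 2 and real α define D_n(α) = d_{n−1}(α) − 2α^n − 2α²·d_{n−2}(α). Then for every real α and every integer ℓ ≥ 1: D_{2ℓ}(α) = (1 − 4α²)·d_{ℓ−1}(α)², and D_{2ℓ+1}(α) = (1 − 2α)·(α^{2ℓ} + (1 + 2α)·d_ℓ(α)·d_{ℓ−1}(α)). -/

import Mathlib

/-- `dpoly n α = ∑_{m=0}^{⌊n/2⌋} (-1)^m C(n-m, m) α^(2m)`. -/
noncomputable def dpoly (n : ℕ) (α : ℝ) : ℝ :=
  ∑ m ∈ Finset.range (n / 2 + 1), (-1 : ℝ) ^ m * (Nat.choose (n - m) m : ℝ) * α ^ (2 * m)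

/-- `Dpoly n α = d_{n-1}(α) - 2α^n - 2α² d_{n-2}(α)`. -/
noncomputable def Dpoly (n : ℕ) (α : ℝ) : ℝ :=
  dpoly (n - 1) α - 2 * α ^ n - 2 * α ^ 2 * dpoly (n - 2) α

lemma dpoly_ext (n N : ℕ) (α : ℝ) (h : n / 2 + 1 ≤ N) :
    dpoly n α = ∑ m ∈ Finset.range N,
      (-1 : ℝ) ^ m * (Nat.choose (n - m) m : ℝ) * α ^ (2 * m) := by
  unfold dpoly
  apply Finset.sum_subset
  · intro m hm
    simp only [Finset.mem_range] at *
    omega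
  · intro m _ hm
    simp only [Finset.mem_range] at hm
    rw [Nat.choose_eq_zero_of_lt (by omega)]
    simp

lemma dpoly_rec (n : ℕ) (α : ℝ) :
    dpoly (n + 2) α = dpoly (n + 1) α - α ^ 2 * dpoly n α := by
  rw [dpoly_ext (n + 2) (n / 2 + 1 + 1) α (by omega),
    dpoly_ext (n + 1) (n / 2 + 1 + 1) α (by omega), dpoly,
    Finset.sum_range_succ', Finset.sum_range_succ' _ (n / 2 + 1), Finset.mul_sum,
    add_sub_right_comm, ← Finset.sum_sub_distrib]
  congr 1
  · apply Finset.sum_congr rfl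
    intro m hm
    simp only [Finset.mem_range] at hm
    have e1 : n + 2 - (m + 1) = (n - m) + 1 := by omega
    have e2 : n + 1 - (m + 1) = n - m := by omega
    rw [e1, e2, Nat.choose_succ_succ]
    push_cast
    ring

lemma dpoly_all (k : ℕ) (α : ℝ) :
    dpoly (2 * k + 1) α = 2 * dpoly k α * dpoly (k + 1) α - dpoly k α ^ 2 ∧
    dpoly (2 * k + 2) α = dpoly (k + 1) α ^ 2 - α ^ 2 * dpoly k α ^ 2 ∧
    dpoly (k + 1) α ^ 2 - dpoly (k + 1) α * dpoly k α + α ^ 2 * dpoly k α ^ 2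
      = α ^ (2 * k + 2) := by
  induction k with
  | zero =>
    have h0 : dpoly 0 α = 1 := by simp [dpoly]
    have h1 : dpoly 1 α = 1 := by simp [dpoly]
    have h2 := dpoly_rec 0 α
    simp only [zero_add, mul_zero, h0, h1] at *
    rw [h2]
    refine ⟨by ring, by ring, by ring⟩
  | succ k ih =>
    obtain ⟨i1, i2, i3⟩ := ih
    have r1 := dpoly_rec (2 * k + 1) α
    have r2 := dpoly_rec (2 * k + 2) α
    have r3 := dpoly_rec k α
    rw [show 2 * (k + 1) + 1 = 2 * k + 1 + 2 by ring,
      show 2 * (k + 1) + 2 = 2 * k + 2 + 2 by ring, show k + 1 + 1 = k + 2 by ring]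
    rw [show 2 * k + 1 + 1 = 2 * k + 2 by ring, i1, i2] at r1
    rw [show 2 * k + 2 + 1 = 2 * k + 1 + 2 by ring, r1, i2] at r2
    rw [r1, r2, r3, show 2 * k + 2 + 2 = (2 * k + 2) + 2 by ring, pow_add α (2 * k + 2) 2, ← i3]
    refine ⟨by ring, by ring, by ring⟩

theorem stmt14 (α : ℝ) (ℓ : ℕ) (hℓ : 1 ≤ ℓ) :
    Dpoly (2 * ℓ) α = (1 - 4 * α ^ 2) * (dpoly (ℓ - 1) α) ^ 2 ∧
      Dpoly (2 * ℓ + 1) α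
        = (1 - 2 * α) * (α ^ (2 * ℓ) + (1 + 2 * α) * dpoly ℓ α * dpoly (ℓ - 1) α) := by
  obtain ⟨k, rfl⟩ : ∃ k, ℓ = k + 1 := ⟨ℓ - 1, by omega⟩
  obtain ⟨i1, i2, i3⟩ := dpoly_all k α
  have r := dpoly_rec (2 * k) α
  unfold Dpoly
  rw [show 2 * (k + 1) - 1 = 2 * k + 1 by omega, show 2 * (k + 1) - 2 = 2 * k by omega,
    show 2 * (k + 1) + 1 - 1 = 2 * k + 2 by omega,
    show 2 * (k + 1) + 1 - 2 = 2 * k + 1 by omega, show k + 1 - 1 = k by omega,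
    show 2 * (k + 1) = 2 * k + 2 by ring, pow_succ α (2 * k + 2), ← i3]
  rw [i1, i2] at r
  rw [i1, i2]
  constructor
  · linear_combination -2 * r
  · ring
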